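/- arXiv:2506.04805 — 6 statements merged into one kernel-verified Lean document; each statement's English description precedes it below -/
import Mathlib

section
/- Let L : ℝ^M → ℝ be twice continuously differentiable, let θ_t ∈ ℝ^M with g_t := ∇L(θ_t) ≠ 0, let η > 0, and set θ_{t+1} := θ_t − η·g_t. Define H̄_t := 2·∫₀¹ (1−s)·∇²L(θ_t − s·η·g_t) ds and the directional curvature λ_grad(H̄_t) := (g_tᵀ·H̄_t·g_t)/‖g_t‖². Then L(θ_{t+1}) > L(θ_t) if and only if λ_grad(H̄_t) > 2/η. -/
/-!
Along the segment `x(s) = θ - (s η) • g` the function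
`F(s) = (1 - s) φ'(s) + φ(s)`, with `φ(s) = L (x s)`, has derivative `(1 - s) φ''(s)`.
The fundamental theorem of calculus on `[0, 1]` therefore gives the second-order Taylor formula
with integral remainder, which here reads
`L (θ - η • g) - L θ = -η ‖g‖² + (η² / 2) gᵀ H̄ g`.
Since `η > 0` and `‖g‖ > 0`, the right side is positive exactly when `gᵀ H̄ g / ‖g‖² > 2 / η`.
-/

/-- The entries of a matrix field representing the second derivative of a `C²` function are
continuous: they are the second derivatives along pairs of standard basis vectors. -/
lemma continuous_hess_entry {M : ℕ}
    (L : EuclideanSpace ℝ (Fin M) → ℝ) (hL : ContDiff ℝ 2 L)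
    (Hess : EuclideanSpace ℝ (Fin M) → Matrix (Fin M) (Fin M) ℝ)
    (hHess : ∀ x u w : EuclideanSpace ℝ (Fin M),
      fderiv ℝ (fun y => fderiv ℝ L y w) x u = ∑ i, ∑ j, u i * Hess x i j * w j)
    (i j : Fin M) : Continuous fun x => Hess x i j := by
  have h1 : ContDiff ℝ 1
      (fun y => fderiv ℝ L y (EuclideanSpace.single j (1 : ℝ))) :=
    (hL.fderiv_right (m := 1) (by norm_num)).clm_apply contDiff_const
  have h2 : Continuous fun x => fderiv ℝ
      (fun y => fderiv ℝ L y (EuclideanSpace.single j (1 : ℝ))) x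
        (EuclideanSpace.single i (1 : ℝ)) :=
    (h1.continuous_fderiv one_ne_zero).clm_apply continuous_const
  refine h2.congr fun x => ?_
  rw [hHess]
  simp

/-- Second-order Taylor formula with integral remainder along `s ↦ θ - (s η) • g`. -/
lemma taylor_along_step {M : ℕ}
    (L : EuclideanSpace ℝ (Fin M) → ℝ) (hL : ContDiff ℝ 2 L)
    (Hess : EuclideanSpace ℝ (Fin M) → Matrix (Fin M) (Fin M) ℝ)
    (hHess : ∀ x u w : EuclideanSpace ℝ (Fin M),
      fderiv ℝ (fun y => fderiv ℝ L y w) x u = ∑ i, ∑ j, u i * Hess x i j * w j)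
    (θ g : EuclideanSpace ℝ (Fin M)) (η : ℝ) :
    L (θ - η • g) - L θ + η * fderiv ℝ L θ g =
      η ^ 2 * ∫ s in (0 : ℝ)..1,
        (1 - s) * ∑ i, ∑ j, g i * Hess (θ - (s * η) • g) i j * g j := by
  have hx : ∀ s : ℝ, HasDerivAt (fun s : ℝ => θ - (s * η) • g) (-(η • g)) s := fun s => by
    simpa using (((hasDerivAt_id s).mul_const η).smul_const g).const_sub θ
  have hφ : ∀ s : ℝ, HasDerivAt (fun s : ℝ => L (θ - (s * η) • g))
      (-η * fderiv ℝ L (θ - (s * η) • g) g) s := fun s => by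
    have h := ((hL.differentiable two_ne_zero _).hasFDerivAt).comp_hasDerivAt s (hx s)
    simpa [Function.comp_def] using h
  have h1 : ContDiff ℝ 1 (fun y => fderiv ℝ L y g) :=
    (hL.fderiv_right (m := 1) (by norm_num)).clm_apply contDiff_const
  have hφ' : ∀ s : ℝ, HasDerivAt (fun s : ℝ => fderiv ℝ L (θ - (s * η) • g) g)
      (-η * ∑ i, ∑ j, g i * Hess (θ - (s * η) • g) i j * g j) s := fun s => by
    have h := ((h1.differentiable one_ne_zero _).hasFDerivAt).comp_hasDerivAt s (hx s)
    rw [map_neg, map_smul, hHess] at h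
    simpa [Function.comp_def] using h
  have hF : ∀ s : ℝ, HasDerivAt
      (fun s : ℝ => (1 - s) * (-η * fderiv ℝ L (θ - (s * η) • g) g) + L (θ - (s * η) • g))
      (η ^ 2 * ((1 - s) * ∑ i, ∑ j, g i * Hess (θ - (s * η) • g) i j * g j)) s := fun s => by
    have h := ((((hasDerivAt_id s).const_sub 1).mul ((hφ' s).const_mul (-η))).add (hφ s))
    refine h.congr_deriv ?_
    simp only [id]
    ring
  have hc := continuous_hess_entry L hL Hess hHess
  have hcont : Continuous fun s : ℝ =>
      η ^ 2 * ((1 - s) * ∑ i, ∑ j, g i * Hess (θ - (s * η) • g) i j * g j) := by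
    have hxc : Continuous fun s : ℝ => θ - (s * η) • g := by fun_prop
    have hc' : ∀ i j, Continuous fun s : ℝ => Hess (θ - (s * η) • g) i j :=
      fun i j => (hc i j).comp hxc
    fun_prop
  have h := intervalIntegral.integral_eq_sub_of_hasDerivAt (a := 0) (b := 1)
    (fun s _ => hF s) (hcont.intervalIntegrable _ _)
  rw [intervalIntegral.integral_const_mul] at h
  rw [h]
  simp
  ring

/-- **Exact necessary and sufficient condition for a loss increase.**
Let `L : ℝ^M → ℝ` be `C²`, `g = ∇L(θ) ≠ 0`, `η > 0`, and define entrywise the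
weighted averaged Hessian `H̄ = 2 ∫₀¹ (1−s) ∇²L(θ − s η g) ds` and the
directional curvature `λ_grad(H̄) = gᵀ H̄ g / ‖g‖²`. Then the gradient step
`θ ↦ θ − η g` increases the loss if and only if `λ_grad(H̄) > 2/η`. -/
theorem loss_increase_iff_grad_curvature {M : ℕ}
    (L : EuclideanSpace ℝ (Fin M) → ℝ) (hL : ContDiff ℝ 2 L)
    (Hess : EuclideanSpace ℝ (Fin M) → Matrix (Fin M) (Fin M) ℝ)
    (hHsymm : ∀ x, (Hess x).IsSymm)
    (hHess : ∀ x u w : EuclideanSpace ℝ (Fin M),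
      fderiv ℝ (fun y => fderiv ℝ L y w) x u = ∑ i, ∑ j, u i * Hess x i j * w j)
    (θ : EuclideanSpace ℝ (Fin M)) (η : ℝ) (hη : 0 < η)
    (g : EuclideanSpace ℝ (Fin M)) (hg : g = gradient L θ) (hg0 : g ≠ 0)
    (Hbar : Matrix (Fin M) (Fin M) ℝ)
    (hHbar : ∀ i j, Hbar i j =
      2 * ∫ s in (0 : ℝ)..1, (1 - s) * Hess (θ - (s * η) • g) i j) :
    L θ < L (θ - η • g) ↔
      2 / η < (∑ i, ∑ j, g i * Hbar i j * g j) / ‖g‖ ^ 2 := by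
  have hT := taylor_along_step L hL Hess hHess θ g η
  have hgrad : fderiv ℝ L θ g = ‖g‖ ^ 2 := by
    have h : inner ℝ (gradient L θ) g = fderiv ℝ L θ g := by
      simp [gradient]
    rw [← h, ← hg, real_inner_self_eq_norm_sq]
  have hquad : (∑ i, ∑ j, g i * Hbar i j * g j) = 2 * ∫ s in (0 : ℝ)..1,
      (1 - s) * ∑ i, ∑ j, g i * Hess (θ - (s * η) • g) i j * g j := by
    have hxc : Continuous fun s : ℝ => θ - (s * η) • g := by fun_prop
    have hc' : ∀ i j, Continuous fun s : ℝ => Hess (θ - (s * η) • g) i j :=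
      fun i j => (continuous_hess_entry L hL Hess hHess i j).comp hxc
    have hI : ∀ i j, Continuous
        (fun s : ℝ => (1 - s) * (g i * Hess (θ - (s * η) • g) i j * g j)) := fun i j =>
      (continuous_const.sub continuous_id).mul
        ((continuous_const.mul (hc' i j)).mul continuous_const)
    simp only [Finset.mul_sum]
    rw [intervalIntegral.integral_finsetSum
      (fun i _ => (continuous_finsetSum _ fun j _ => hI i j).intervalIntegrable _ _), Finset.mul_sum]
    refine Finset.sum_congr rfl fun i _ => ?_
    rw [intervalIntegral.integral_finsetSum
      (fun j _ => (hI i j).intervalIntegrable _ _), Finset.mul_sum]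
    refine Finset.sum_congr rfl fun j _ => ?_
    have he : ∀ s : ℝ, (1 - s) * (g i * Hess (θ - (s * η) • g) i j * g j) =
        (g i * g j) * ((1 - s) * Hess (θ - (s * η) • g) i j) := fun s => by ring
    simp only [he]
    rw [intervalIntegral.integral_const_mul, hHbar]
    ring
  have hn : 0 < ‖g‖ ^ 2 := by positivity
  rw [hgrad] at hT
  rw [hquad, div_lt_div_iff₀ hη hn]
  set I := ∫ s in (0 : ℝ)..1, (1 - s) * ∑ i, ∑ j, g i * Hess (θ - (s * η) • g) i j * g j
  have key : L (θ - η • g) - L θ = η * (η * I - ‖g‖ ^ 2) := by linarith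
  rw [← sub_pos, key, mul_pos_iff_of_pos_left hη]
  constructor <;> intro h <;> linarith
end

section
/- Consider the recursion θ_{t+1} = (1 − η/√(v_t))·θ_t, v_{t+1} = β₂·v_t + (1−β₂)·θ_t² with η > 0, β₂ ∈ (0,1), v₀ = θ₀², and |θ₀| > η/2. If additionally 1/ln(1/β₂) > 1/ln(2|θ₀|/η) + 1/ln 2, then the time t₂ := inf{t ∈ ℕ⁺ : 1 − η/√(v_t) < −1} is finite; that is, there exists a finite positive integer t with √(v_t) < η/2. -/
/-!
After rescaling by `η` put `m t = |θ t| / η` and `w t = v t / η²`, so that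
`m (t+1) = |1 - 1/√(w t)| * m t`. Suppose `w t ≥ 1/4` for all `t`. Then `m` is antitone, hence
`m t ^ 2 ≤ w t`, hence `w` is antitone too. Both sequences converge, and passing to the limit in
the recursion forces `m → 1/2` and `w → 1/4`.

This limit is a repelling (spiral) fixed point. With `x = m - 1/2 ≥ 0` and `y = w - 1/4 ≥ 0`, close
to the fixed point `x' ≤ x - y` and `y' ≥ β y + (1 - β) x`. Hence a bound `y ≥ r x` improves to
`y' ≥ (r + (1 - β)) x'`, while `x' ≥ 0` forces `y ≤ x`; so `x` vanishes at a finite time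
(`cone_escape`). But the fixed point cannot be reached in finite time while `m ≥ 1/2` and
`w ≥ 1/4` unless the orbit starts there, and `m 0 > 1/2`.
-/

/-- The slope `y / x` increases by at least `1 - β` at every step, yet `x (t + 1) ≥ 0` keeps it
at most `1` as long as `x > 0`. -/
lemma cone_escape {β : ℝ} (hβ1 : β < 1) (x y : ℕ → ℝ)
    (hx : ∀ t, 0 ≤ x t) (hy : ∀ t, 0 ≤ y t)
    (hx' : ∀ t, x (t + 1) ≤ x t - y t)
    (hy' : ∀ t, β * y t + (1 - β) * x t ≤ y (t + 1)) :
    ∃ t, x t = 0 := by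
  have key : ∀ n : ℕ, (n * (1 - β)) * x n ≤ y n := by
    intro n
    induction n with
    | zero => simpa using hy 0
    | succ n ih =>
      push_cast
      have hr : 0 ≤ (n : ℝ) * (1 - β) := mul_nonneg n.cast_nonneg (by linarith)
      have h1 := mul_le_mul_of_nonneg_left (hx' n)
        (by linarith : 0 ≤ (n : ℝ) * (1 - β) + (1 - β))
      have h2 := mul_nonneg hr (hy n)
      linarith [hy' n]
  obtain ⟨n, hn⟩ := exists_nat_gt (1 / (1 - β))
  rw [div_lt_iff₀ (by linarith)] at hn
  refine ⟨n, le_antisymm ?_ (hx n)⟩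
  have h1 : y n ≤ x n := by linarith [hx' n, hx (n + 1)]
  by_contra! h
  nlinarith [key n]

/-- The linear bound `1 / √w - 1 ≤ 1 - 2 (w - 1/4)` near `w = 1/4`; the true slope there is
`-4`, and the slack pays for the nonlinear terms. -/
lemma abs_factor_le {w : ℝ} (h1 : 1 / 4 ≤ w) (h2 : w ≤ 9 / 16) :
    |1 - 1 / √w| ≤ 1 - 2 * (w - 1 / 4) := by
  have hs1 : 1 / 2 ≤ √w := Real.le_sqrt_of_sq_le (by linarith)
  have hs2 : √w ≤ 3 / 4 := Real.sqrt_le_iff.2 ⟨by norm_num, by linarith⟩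
  have hsq : √w ^ 2 = w := Real.sq_sqrt (by linarith)
  set s := √w
  have hs : 0 < s := by linarith
  have h3 : 1 ≤ 1 / s := by rw [le_div_iff₀ hs]; linarith
  rw [abs_of_nonpos (by linarith), ← hsq]
  have h4 : 1 / s ≤ 5 / 2 - 2 * s ^ 2 := by
    rw [div_le_iff₀ hs]
    nlinarith [mul_nonneg (sub_nonneg.2 hs1) (by nlinarith : 0 ≤ 2 - s - 2 * s ^ 2)]
  linarith

open Filter Topology in
/-- The rescaled statement (`η = 1`), for the absolute value of the iterate. -/
lemma exists_lt_quarter {β : ℝ} (hβ0 : 0 < β) (hβ1 : β < 1) (m w : ℕ → ℝ)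
    (hm : ∀ t, 0 ≤ m t)
    (hmrec : ∀ t, m (t + 1) = |1 - 1 / √(w t)| * m t)
    (hwrec : ∀ t, w (t + 1) = β * w t + (1 - β) * m t ^ 2)
    (hw0 : w 0 = m 0 ^ 2) (hm0 : 1 / 2 < m 0) :
    ∃ t, w t < 1 / 4 := by
  by_contra! hw
  have hs : ∀ t, 1 / 2 ≤ √(w t) := fun t ↦ Real.le_sqrt_of_sq_le (by linarith [hw t])
  have hanti : ∀ t, m (t + 1) ≤ m t := by
    intro t
    rw [hmrec]
    refine mul_le_of_le_one_left (hm t) (abs_le.2 ⟨?_, ?_⟩)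
    · have : 1 / √(w t) ≤ 2 := by
        rw [div_le_iff₀ (by linarith [hs t])]; linarith [hs t]
      linarith
    · have : 0 ≤ 1 / √(w t) := by positivity
      linarith
  have hmw : ∀ t, m t ^ 2 ≤ w t := by
    intro t
    induction t with
    | zero => exact hw0.ge
    | succ t ih =>
      have h1 : m (t + 1) ^ 2 ≤ m t ^ 2 := pow_le_pow_left₀ (hm _) (hanti t) 2
      rw [hwrec]
      nlinarith
  have hwanti : ∀ t, w (t + 1) ≤ w t := by
    intro t
    rw [hwrec]
    nlinarith [hmw t]
  have hmA : Antitone m := antitone_nat_of_succ_le hanti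
  have hwA : Antitone w := antitone_nat_of_succ_le hwanti
  obtain ⟨c, hc⟩ : ∃ c, Tendsto m atTop (𝓝 c) :=
    ⟨_, tendsto_atTop_ciInf hmA ⟨0, by rintro _ ⟨t, rfl⟩; exact hm t⟩⟩
  obtain ⟨d, hd⟩ : ∃ d, Tendsto w atTop (𝓝 d) :=
    ⟨_, tendsto_atTop_ciInf hwA ⟨1 / 4, by rintro _ ⟨t, rfl⟩; exact hw t⟩⟩
  have hc0 : 0 ≤ c := ge_of_tendsto' hc hm
  have hd4 : 1 / 4 ≤ d := ge_of_tendsto' hd hw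
  have hdc : d = c ^ 2 := by
    have h1 : Tendsto (fun t ↦ w (t + 1)) atTop (𝓝 (β * d + (1 - β) * c ^ 2)) := by
      simp only [hwrec]
      exact (hd.const_mul β).add ((hc.pow 2).const_mul (1 - β))
    have h2 := tendsto_nhds_unique ((tendsto_add_atTop_iff_nat 1).2 hd) h1
    have h3 : (1 - β) * (d - c ^ 2) = 0 := by linarith
    rcases mul_eq_zero.1 h3 with h | h <;> linarith
  have hchalf : 1 / 2 ≤ c := by nlinarith
  have hsd : √d = c := by rw [hdc, Real.sqrt_sq hc0]
  have hc2 : c = 1 / 2 := by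
    have h1 : Tendsto (fun t ↦ m (t + 1)) atTop (𝓝 (|1 - 1 / c| * c)) := by
      simp only [hmrec]
      refine Tendsto.mul (Tendsto.abs (tendsto_const_nhds.sub
        (Tendsto.div tendsto_const_nhds ?_ (by linarith)))) hc
      rw [← hsd]
      exact hd.sqrt
    have h2 := tendsto_nhds_unique ((tendsto_add_atTop_iff_nat 1).2 hc) h1
    have hcpos : 0 < c := by linarith
    have h3 : |1 - 1 / c| * c = |c - 1| := by
      rw [← abs_of_pos hcpos, ← abs_mul, abs_of_pos hcpos]
      congr 1
      field_simp
    rw [h3] at h2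
    rcases abs_cases (c - 1) with h | h <;> linarith
  have hm2 : ∀ t, 1 / 2 ≤ m t := fun t ↦ hc2 ▸ hmA.le_of_tendsto hc t
  -- The value `1 / 2` is never attained: attaining it at `t + 1` forces `w (t + 1) = 1 / 4`,
  -- hence `m t = 1 / 2`, and so on back to time `0`.
  have hne : ∀ t, m t ≠ 1 / 2 := by
    intro t
    induction t with
    | zero => exact hm0.ne'
    | succ t ih =>
      intro h
      have h1 : m (t + 2) = 1 / 2 := le_antisymm (h ▸ hanti (t + 1)) (hm2 _)
      have h2 : |1 - 1 / √(w (t + 1))| = 1 := by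
        have := hmrec (t + 1)
        rw [h1, h] at this
        linarith
      have hpos : 0 < √(w (t + 1)) := by linarith [hs (t + 1)]
      have h3 : √(w (t + 1)) = 1 / 2 := by
        have h5 : 0 < 1 / √(w (t + 1)) := by positivity
        have h4 : 1 / √(w (t + 1)) = 2 := by
          rcases abs_cases (1 - 1 / √(w (t + 1))) with h | h <;> linarith
        rw [div_eq_iff hpos.ne'] at h4
        linarith
      have h4 : w (t + 1) = 1 / 4 := by
        rw [← Real.sq_sqrt (by linarith [hw (t + 1)] : 0 ≤ w (t + 1)), h3]; norm_num
      rw [hwrec] at h4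
      have h5 : (1 / 2 : ℝ) < m t := lt_of_le_of_ne (hm2 t) (Ne.symm ih)
      nlinarith [hw t, mul_pos (sub_pos.2 hβ1) (by nlinarith : 0 < m t ^ 2 - 1 / 4)]
  have hd' : d < 9 / 16 := by rw [hdc, hc2]; norm_num
  obtain ⟨N, hN⟩ := eventually_atTop.1 (hd.eventually (gt_mem_nhds hd'))
  obtain ⟨t, ht⟩ := cone_escape hβ1 (fun t ↦ m (N + t) - 1 / 2) (fun t ↦ w (N + t) - 1 / 4)
    (fun t ↦ by linarith [hm2 (N + t)]) (fun t ↦ by linarith [hw (N + t)])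
    (fun t ↦ by
      have h1 := abs_factor_le (hw (N + t)) (hN (N + t) (by lia)).le
      have h2 := mul_le_mul_of_nonneg_right h1 (hm (N + t))
      rw [← hmrec] at h2
      have h3 := mul_nonneg (sub_nonneg.2 (hw (N + t))) (sub_nonneg.2 (hm2 (N + t)))
      change m (N + t + 1) - 1 / 2 ≤ _
      linarith)
    (fun t ↦ by
      change _ ≤ w (N + t + 1) - 1 / 4
      rw [hwrec]
      nlinarith [mul_nonneg (sub_nonneg.2 hβ1.le) (sq_nonneg (m (N + t) - 1 / 2))])
  exact hne (N + t) (by linarith)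

/-- **Finiteness of the instability onset time.**
For Adam (β₁ = 0) on the 1D quadratic, i.e. the recursion
`θ_{t+1} = (1 − η/√v_t) θ_t`, `v_{t+1} = β₂ v_t + (1−β₂) θ_t²` with `η > 0`,
`β₂ ∈ (0,1)`, `v₀ = θ₀²`, `|θ₀| > η/2`, and
`1/ln(1/β₂) > 1/ln(2|θ₀|/η) + 1/ln 2`, there exists a finite positive integer
`t` with `1 − η/√v_t < −1`, i.e. `√v_t < η/2`. -/
theorem adam_quadratic_instability_onset_finite (η β₂ : ℝ) (hη : 0 < η)
    (hβ₂0 : 0 < β₂) (hβ₂1 : β₂ < 1)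
    (θ v : ℕ → ℝ)
    (hθrec : ∀ t, θ (t + 1) = (1 - η / Real.sqrt (v t)) * θ t)
    (hvrec : ∀ t, v (t + 1) = β₂ * v t + (1 - β₂) * θ t ^ 2)
    (hv0 : v 0 = θ 0 ^ 2)
    (hθ0 : η / 2 < |θ 0|)
    (hcond : 1 / Real.log (2 * |θ 0| / η) + 1 / Real.log 2
      < 1 / Real.log (1 / β₂)) :
    ∃ t : ℕ, 0 < t ∧ 1 - η / Real.sqrt (v t) < -1 ∧ Real.sqrt (v t) < η / 2 := by
  have hm0 : 1 / 2 < |θ 0| / η := by rw [lt_div_iff₀ hη]; linarith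
  have hvpos : ∀ t, 0 < v t := by
    intro t
    induction t with
    | zero => rw [hv0, ← sq_abs]; exact pow_pos (by linarith) 2
    | succ t ih =>
      rw [hvrec]
      have := mul_nonneg (sub_nonneg.2 hβ₂1.le) (sq_nonneg (θ t))
      have := mul_pos hβ₂0 ih
      linarith
  have hsqrt : ∀ t, √(v t / η ^ 2) = √(v t) / η := fun t ↦ by
    rw [Real.sqrt_div (hvpos t).le, Real.sqrt_sq hη.le]
  obtain ⟨t, ht⟩ := exists_lt_quarter hβ₂0 hβ₂1 (fun t ↦ |θ t| / η) (fun t ↦ v t / η ^ 2)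
    (fun t ↦ by positivity)
    (fun t ↦ by
      rw [hsqrt, hθrec, abs_mul, one_div_div, mul_div_assoc])
    (fun t ↦ by
      rw [hvrec, div_pow, sq_abs]
      ring)
    (by rw [hv0, div_pow, sq_abs]) hm0
  have hlt : √(v t) < η / 2 := by
    rw [Real.sqrt_lt' (by linarith)]
    rw [div_lt_iff₀ (by positivity)] at ht
    linarith
  have hpos : 0 < √(v t) := Real.sqrt_pos.2 (hvpos t)
  refine ⟨t, Nat.pos_of_ne_zero ?_, ?_, hlt⟩
  · rintro rfl
    rw [hv0, Real.sqrt_sq_eq_abs] at hlt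
    linarith
  · have : 2 < η / √(v t) := by rw [lt_div_iff₀ hpos]; linarith
    linarith
end

section
/- Consider the recursion θ_{t+1} = (1 − η/√(v_t))·θ_t, v_{t+1} = β₂·v_t + (1−β₂)·θ_t² with η > 0 and β₂ ∈ (0,1). Suppose at some time t₂ one has √(v_{t₂}) < η/2 and θ_{t₂} ≠ 0, and suppose v_{t+1} ≤ v_t for all t with t₂ ≤ t < t₃. Then, setting q := η/√(v_{t₂}) − 1 > 1, one has |1 − η/√(v_t)| ≥ q for all t₂ ≤ t < t₃, and hence |θ_t| ≥ q^{t−t₂}·|θ_{t₂}| for all t₂ ≤ t ≤ t₃; in particular the loss L(θ_t) = θ_t²/2 grows at least geometrically with ratio q² on this interval. -/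
/-!
While `v` is non-increasing, `√(v t) ≤ √(v t₂) < η / 2`, so `η / √(v t) - 1` is positive and at
least `q = η / √(v t₂) - 1 > 1`. Each step therefore multiplies `|θ|` by at least `q`; induction
on `t` gives the geometric bound on `|θ t|`, and squaring it gives the bound on the loss.
-/

/-- **Geometric growth of the loss during the spike.**
For the recursion `θ_{t+1} = (1 − η/√v_t) θ_t`, `v_{t+1} = β₂ v_t + (1−β₂) θ_t²`
with `η > 0`, `β₂ ∈ (0,1)` and `v_t > 0`, suppose `√v_{t₂} < η/2`, `θ_{t₂} ≠ 0`,
and `v` is non-increasing on `[t₂, t₃)`. Then, with `q = η/√v_{t₂} − 1 > 1`,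
the multiplier satisfies `|1 − η/√v_t| ≥ q` on `[t₂, t₃)`, hence
`|θ_t| ≥ q^{t−t₂} |θ_{t₂}|` on `[t₂, t₃]`; in particular the loss
`L(θ_t) = θ_t²/2` grows at least geometrically with ratio `q²`. -/
theorem adam_quadratic_spike_growth (η β₂ : ℝ) (hη : 0 < η)
    (hβ₂0 : 0 < β₂) (hβ₂1 : β₂ < 1)
    (θ v : ℕ → ℝ)
    (hθrec : ∀ t, θ (t + 1) = (1 - η / Real.sqrt (v t)) * θ t)
    (hvrec : ∀ t, v (t + 1) = β₂ * v t + (1 - β₂) * θ t ^ 2)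
    (hvpos : ∀ t, 0 < v t)
    (t₂ t₃ : ℕ)
    (hunstable : Real.sqrt (v t₂) < η / 2)
    (hθt₂ : θ t₂ ≠ 0)
    (hmono : ∀ t, t₂ ≤ t → t < t₃ → v (t + 1) ≤ v t) :
    1 < η / Real.sqrt (v t₂) - 1 ∧
      (∀ t, t₂ ≤ t → t < t₃ →
        η / Real.sqrt (v t₂) - 1 ≤ |1 - η / Real.sqrt (v t)|) ∧
      (∀ t, t₂ ≤ t → t ≤ t₃ →
        (η / Real.sqrt (v t₂) - 1) ^ (t - t₂) * |θ t₂| ≤ |θ t|) ∧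
      (∀ t, t₂ ≤ t → t ≤ t₃ →
        ((η / Real.sqrt (v t₂) - 1) ^ 2) ^ (t - t₂) * (θ t₂ ^ 2 / 2)
          ≤ θ t ^ 2 / 2) := by
  have hs : ∀ t, 0 < Real.sqrt (v t) := fun t => Real.sqrt_pos.2 (hvpos t)
  have hq : 1 < η / Real.sqrt (v t₂) - 1 := by
    have : 2 < η / Real.sqrt (v t₂) := by
      rw [lt_div_iff₀ (hs t₂)]
      linarith
    linarith
  have hv : ∀ t, t₂ ≤ t → t ≤ t₃ → v t ≤ v t₂ := by
    intro t ht
    induction t, ht using Nat.le_induction with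
    | base => exact fun _ => le_rfl
    | succ t ht ih => exact fun h => (hmono t ht h).trans (ih (Nat.le_of_succ_le h))
  have hmul : ∀ t, t₂ ≤ t → t < t₃ →
      η / Real.sqrt (v t₂) - 1 ≤ |1 - η / Real.sqrt (v t)| := by
    intro t ht h
    have hle : η / Real.sqrt (v t₂) ≤ η / Real.sqrt (v t) :=
      div_le_div_of_nonneg_left hη.le (hs t) (Real.sqrt_le_sqrt (hv t ht h.le))
    calc η / Real.sqrt (v t₂) - 1 ≤ -(1 - η / Real.sqrt (v t)) := by linarith
      _ ≤ |1 - η / Real.sqrt (v t)| := neg_le_abs _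
  have hgrow : ∀ t, t₂ ≤ t → t ≤ t₃ →
      (η / Real.sqrt (v t₂) - 1) ^ (t - t₂) * |θ t₂| ≤ |θ t| := by
    intro t ht
    induction t, ht using Nat.le_induction with
    | base => simp
    | succ t ht ih =>
      intro h
      rw [Nat.succ_sub ht, pow_succ', mul_assoc, hθrec, abs_mul]
      exact mul_le_mul (hmul t ht h) (ih (Nat.le_of_succ_le h))
        (mul_nonneg (pow_nonneg (by linarith) _) (abs_nonneg _)) (abs_nonneg _)
  refine ⟨hq, hmul, hgrow, fun t ht h => ?_⟩
  have hsq := pow_le_pow_left₀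
    (mul_nonneg (pow_nonneg (by linarith) _) (abs_nonneg _)) (hgrow t ht h) 2
  rw [mul_pow, sq_abs, sq_abs, pow_right_comm] at hsq
  linarith
end

section
/- Consider the recursion θ_{t+1} = (1 − η/√(v_t))·θ_t, v_{t+1} = β₂·v_t + (1−β₂)·θ_t² with η > 0 and β₂ ∈ (0,1). Suppose at some time t₂ one has √(v_{t₂}) < η/2 and θ_{t₂} ≠ 0. Then t₃ := inf{t > t₂ : v_{t+1} > v_t} is finite; that is, the second-moment sequence v_t cannot be non-increasing for all t ≥ t₂. -/
/-! The update of `v` moves it towards `θ ^ 2`, so `v` increases at time `t` exactly when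
`v t < θ t ^ 2` (`lt_step_iff`). Below the stability threshold `√v < η / 2` the multiplier
`1 - η / √v` has absolute value at least `q > 1`, with `q` uniform as long as `v` does not exceed
its initial value (`growth_factor`). If `v` never increased from `t₂` on, then `|θ|` would grow
like `q ^ n` while `θ ^ 2 ≤ v` stays bounded, a contradiction.

The increase is required at a time strictly after `t₂`. If `v` increases at `t₂` itself, then
`v (t₂ + 1)` is still below `θ t₂ ^ 2 ≤ θ (t₂ + 1) ^ 2`, so it increases again at `t₂ + 1`. -/

/-- The averaging step `v ↦ β v + (1 - β) x` increases `v` exactly when `v < x`. -/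
lemma lt_step_iff {β v x : ℝ} (hβ : β < 1) : v < β * v + (1 - β) * x ↔ v < x := by
  have h : 0 < 1 - β := by linarith
  rw [← mul_lt_mul_iff_right₀ (b := v) (c := x) h]
  constructor <;> intro h <;> linarith

lemma growth_factor {η v w : ℝ} (hη : 0 < η) (hw : 0 < w) (hwv : w ≤ v) :
    η / √v - 1 ≤ |1 - η / √w| := by
  have h : η / √v ≤ η / √w :=
    div_le_div_of_nonneg_left hη.le (Real.sqrt_pos.2 hw) (Real.sqrt_le_sqrt hwv)
  have h' := neg_le_abs (1 - η / √w)
  linarith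


/-- **The second moment must eventually increase after instability onset.**
For the recursion `θ_{t+1} = (1 − η/√v_t) θ_t`, `v_{t+1} = β₂ v_t + (1−β₂) θ_t²`
with `η > 0`, `β₂ ∈ (0,1)` and `v_t > 0`, if at some time `t₂` one has
`√v_{t₂} < η/2` and `θ_{t₂} ≠ 0`, then there exists `t > t₂` with
`v_{t+1} > v_t`; i.e. `v` cannot be non-increasing for all `t ≥ t₂`. -/
theorem adam_quadratic_second_moment_must_increase (η β₂ : ℝ) (hη : 0 < η)
    (hβ₂0 : 0 < β₂) (hβ₂1 : β₂ < 1)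
    (θ v : ℕ → ℝ)
    (hθrec : ∀ t, θ (t + 1) = (1 - η / Real.sqrt (v t)) * θ t)
    (hvrec : ∀ t, v (t + 1) = β₂ * v t + (1 - β₂) * θ t ^ 2)
    (hvpos : ∀ t, 0 < v t)
    (t₂ : ℕ)
    (hunstable : Real.sqrt (v t₂) < η / 2)
    (hθt₂ : θ t₂ ≠ 0) :
    ∃ t : ℕ, t₂ < t ∧ v t < v (t + 1) := by
  -- `q` bounds the growth factor of `|θ|` from below as long as `v t ≤ v t₂`.
  obtain ⟨q, hq⟩ : ∃ q, q = η / √(v t₂) - 1 := ⟨_, rfl⟩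
  have hq1 : 1 < q := by
    have : 2 < η / √(v t₂) := by
      rw [lt_div_iff₀ (Real.sqrt_pos.2 (hvpos t₂))]
      linarith
    linarith
  have hgrow : ∀ t, v t ≤ v t₂ → q * |θ t| ≤ |θ (t + 1)| := by
    intro t ht
    rw [hθrec t, abs_mul, hq]
    exact mul_le_mul_of_nonneg_right (growth_factor hη (hvpos t) ht) (abs_nonneg _)
  have hinc : ∀ t, v t < v (t + 1) ↔ v t < θ t ^ 2 := by
    intro t
    rw [hvrec t]
    exact lt_step_iff hβ₂1
  by_cases h0 : v t₂ < v (t₂ + 1)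
  · refine ⟨t₂ + 1, t₂.lt_succ_self, (hinc _).2 ?_⟩
    have h1 : v t₂ < θ t₂ ^ 2 := (hinc t₂).1 h0
    have h2 : v (t₂ + 1) < θ t₂ ^ 2 := by
      rw [hvrec]
      nlinarith
    have h3 : θ t₂ ^ 2 ≤ θ (t₂ + 1) ^ 2 := by
      apply sq_le_sq.2
      exact (le_mul_of_one_le_left (abs_nonneg _) hq1.le).trans (hgrow t₂ le_rfl)
    exact h2.trans_le h3
  · by_contra! hcon
    have hmono : ∀ t, t₂ ≤ t → v (t + 1) ≤ v t := by
      intro t ht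
      rcases ht.eq_or_lt with rfl | ht
      · exact not_lt.1 h0
      · exact hcon t ht
    have hv : ∀ n, v (t₂ + n) ≤ v t₂ := by
      intro n
      induction n with
      | zero => exact le_rfl
      | succ n ih => exact (hmono (t₂ + n) (Nat.le_add_right _ _)).trans ih
    have hθ : ∀ n, q ^ n * |θ t₂| ≤ |θ (t₂ + n)| := by
      intro n
      induction n with
      | zero => simp
      | succ n ih =>
        calc q ^ (n + 1) * |θ t₂| = q * (q ^ n * |θ t₂|) := by ring
          _ ≤ q * |θ (t₂ + n)| := mul_le_mul_of_nonneg_left ih (by linarith)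
          _ ≤ |θ (t₂ + (n + 1))| := hgrow _ (hv n)
    have hbdd : ∀ n, |θ (t₂ + n)| ≤ √(v t₂) := by
      intro n
      apply Real.abs_le_sqrt
      have h := (not_congr (hinc (t₂ + n))).1 (not_lt.2 (hmono _ (Nat.le_add_right _ _)))
      exact (not_lt.1 h).trans (hv n)
    obtain ⟨n, hn⟩ := pow_unbounded_of_one_lt (√(v t₂) / |θ t₂|) hq1
    rw [div_lt_iff₀ (abs_pos.2 hθt₂)] at hn
    linarith [hθ n, hbdd n]
end

section
/- Consider the recursion θ_{t+1} = (1 − η/√(v_t))·θ_t, v_{t+1} = β₂·v_t + (1−β₂)·θ_t² with η > 0 and β₂ ∈ (0,1). Suppose at some time t₃ one has v_{t₃+1} > v_{t₃} (equivalently θ_{t₃}² > v_{t₃}) and √(v_t) ≤ η/2 for all t₂ < t ≤ t₃ where t₃ arose as the first increase time of v after an unstable time t₂ with √(v_{t₂}) < η/2. Then t₄ := inf{t > t₃ : √(v_t) > η/2} is finite; that is, the second-moment estimate eventually exceeds (η/2)². -/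
/-!
In the unstable regime `√v_t ≤ η/2` the multiplier `1 - η/√v_t` has absolute value at least `1`
(`le_abs_multiplier_mul`), so `|θ|` does not decrease there. At `t₃` the increase of `v` means
`√v_{t₃} < |θ_{t₃}|`, whence `|θ_{t₃+1}| = (η/√v_{t₃} - 1) |θ_{t₃}| > η - √v_{t₃} ≥ η/2`.

If `√v_t ≤ η/2` held for every `t > t₃`, then `θ_t² ≥ c := θ_{t₃+1}² > (η/2)²` from `t₃ + 1` on.
The moving average `v` then approaches or passes `c` geometrically, `c - v_{t+1} ≤ β₂ (c - v_t)`, so it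
cannot remain below `(η/2)² < c`. The argument bounds `θ²` below by a constant, and so needs
no limit of `|θ_t|`.
-/

/-- Cleared of its denominator, the growth factor `|1 - η/s|` is at least `(η - s)/s`. -/
lemma le_abs_multiplier_mul {η s : ℝ} (hs : 0 < s) : η - s ≤ |1 - η / s| * s := by
  have h : (η / s - 1) * s = η - s := by field_simp
  have h2 : η / s - 1 ≤ |1 - η / s| := by
    rw [abs_sub_comm]
    exact le_abs_self _
  calc η - s = (η / s - 1) * s := h.symm
    _ ≤ |1 - η / s| * s := mul_le_mul_of_nonneg_right h2 hs.le

/-- A moving average of inputs that are at least `c` has gap to `c` at most `β ^ n` times the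
initial gap. -/
lemma sub_movingAverage_le {β c : ℝ} (hβ0 : 0 < β) (hβ1 : β < 1) {w x : ℕ → ℝ}
    (hw : ∀ n, w (n + 1) = β * w n + (1 - β) * x n) (hx : ∀ n, c ≤ x n) (n : ℕ) :
    c - w n ≤ β ^ n * (c - w 0) := by
  induction n with
  | zero => simp
  | succ n ih =>
    calc c - w (n + 1) = β * (c - w n) - (1 - β) * (x n - c) := by rw [hw]; ring
      _ ≤ β * (c - w n) :=
        sub_le_self _ (mul_nonneg (sub_nonneg.2 hβ1.le) (sub_nonneg.2 (hx n)))
      _ ≤ β * (β ^ n * (c - w 0)) := mul_le_mul_of_nonneg_left ih hβ0.le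
      _ = β ^ (n + 1) * (c - w 0) := by ring


/-- **The preconditioner eventually exceeds the stability threshold.**
For the recursion `θ_{t+1} = (1 − η/√v_t) θ_t`, `v_{t+1} = β₂ v_t + (1−β₂) θ_t²`
with `η > 0`, `β₂ ∈ (0,1)` and `v_t > 0`, suppose `t₃ > t₂` is the first
increase time of `v` after an unstable time `t₂` (that is, `√v_{t₂} < η/2`,
`v` is non-increasing on `[t₂, t₃)`, and `v_{t₃+1} > v_{t₃}`), and suppose
`√v_t ≤ η/2` for all `t₂ < t ≤ t₃`. Then there exists `t > t₃` with
`√v_t > η/2`; i.e. the second-moment estimate eventually exceeds `(η/2)²`. -/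
theorem adam_quadratic_preconditioner_recovers (η β₂ : ℝ) (hη : 0 < η)
    (hβ₂0 : 0 < β₂) (hβ₂1 : β₂ < 1)
    (θ v : ℕ → ℝ)
    (hθrec : ∀ t, θ (t + 1) = (1 - η / Real.sqrt (v t)) * θ t)
    (hvrec : ∀ t, v (t + 1) = β₂ * v t + (1 - β₂) * θ t ^ 2)
    (hvpos : ∀ t, 0 < v t)
    (t₂ t₃ : ℕ) (ht₂₃ : t₂ < t₃)
    (hunstable : Real.sqrt (v t₂) < η / 2)
    (hfirst : ∀ t, t₂ ≤ t → t < t₃ → v (t + 1) ≤ v t)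
    (hinc : v t₃ < v (t₃ + 1))
    (hsmall : ∀ t, t₂ < t → t ≤ t₃ → Real.sqrt (v t) ≤ η / 2) :
    ∃ t : ℕ, t₃ < t ∧ η / 2 < Real.sqrt (v t) := by
  by_contra! hcon
  have hspos : ∀ t, 0 < Real.sqrt (v t) := fun t => Real.sqrt_pos.2 (hvpos t)
  have habs : ∀ t, |θ (t + 1)| = |1 - η / Real.sqrt (v t)| * |θ t| := fun t => by
    rw [hθrec, abs_mul]
  have hθ₃ : Real.sqrt (v t₃) < |θ t₃| := by
    have h := hvrec t₃
    have h2 : v t₃ < θ t₃ ^ 2 := by nlinarith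
    rw [← Real.sqrt_sq_eq_abs]
    exact Real.sqrt_lt_sqrt (hvpos t₃).le h2
  have hbig : η / 2 < |θ (t₃ + 1)| := by
    have hs := hsmall t₃ ht₂₃ le_rfl
    have hm := le_abs_multiplier_mul (η := η) (hspos t₃)
    have hmpos : 0 < |1 - η / Real.sqrt (v t₃)| :=
      pos_of_mul_pos_left (by linarith) (hspos t₃).le
    rw [habs]
    linarith [mul_lt_mul_of_pos_left hθ₃ hmpos]
  have hmono : Monotone fun n => |θ (t₃ + 1 + n)| := by
    refine monotone_nat_of_le_succ fun n => ?_
    have hs := hcon (t₃ + 1 + n) (by omega)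
    have hm := le_abs_multiplier_mul (η := η) (hspos (t₃ + 1 + n))
    have h1 : 1 ≤ |1 - η / Real.sqrt (v (t₃ + 1 + n))| :=
      le_of_mul_le_mul_right (by linarith) (hspos (t₃ + 1 + n))
    change _ ≤ |θ (t₃ + 1 + n + 1)|
    rw [habs]
    exact le_mul_of_one_le_left (abs_nonneg _) h1
  have hc : ∀ n, θ (t₃ + 1) ^ 2 ≤ θ (t₃ + 1 + n) ^ 2 := fun n =>
    sq_le_sq.2 (hmono (Nat.zero_le n))
  have hgap : (η / 2) ^ 2 < θ (t₃ + 1) ^ 2 := by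
    rw [← sq_abs (θ (t₃ + 1))]
    exact pow_lt_pow_left₀ hbig (by positivity) two_ne_zero
  have hcpos : 0 < θ (t₃ + 1) ^ 2 := (by positivity : 0 < (η / 2) ^ 2).trans hgap
  obtain ⟨n, hn⟩ := exists_pow_lt_of_lt_one (div_pos (sub_pos.2 hgap) hcpos) hβ₂1
  rw [lt_div_iff₀ hcpos] at hn
  have hv := sub_movingAverage_le hβ₂0 hβ₂1 (w := fun n => v (t₃ + 1 + n))
    (x := fun n => θ (t₃ + 1 + n) ^ 2) (fun n => hvrec (t₃ + 1 + n)) hc n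
  have hvle : v (t₃ + 1 + n) ≤ (η / 2) ^ 2 :=
    (Real.sqrt_le_left (by positivity)).1 (hcon (t₃ + 1 + n) (by omega))
  have hdrop : 0 ≤ β₂ ^ n * v (t₃ + 1) := mul_nonneg (by positivity) (hvpos _).le
  simp only [Nat.add_zero, mul_sub] at hv
  linarith
end

section
/- Consider the recursion θ_{t+1} = (1 − η_t/√(v_t))·θ_t, v_{t+1} = β₂·v_t + (1−β₂)·θ_t² with decaying learning rate η_t = η₀·(t+1)^{−α} for some α ∈ (0,1) and η₀ > 0, with initialization v₀ = θ₀² and |θ₀| > 2η₀. Then for β₂ sufficiently close to 1 (i.e. there exists β* ∈ (0,1) such that for all β₂ ∈ (β*,1)), the stability condition |1 − η_t/√(v_t)| < 1 cannot hold for all positive integers t; that is, there exists some t with √(v_t) ≤ η_t/2. -/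
/-!
Write `η t` for the learning rate and `b = β₂`, and suppose that `√(v t) > η t / 2` for every `t`.
Then `|θ|` is nonincreasing, so `v (s + n) ≤ b ^ n * v s + θ s ^ 2` (`v_add_le`).

* There is a first time `T` with `√(v T) ≤ η T` (`exists_sqrt_le`): otherwise `|θ t|` would decay
  like `exp (-c * t ^ (1 - α))`, hence `v (2 * m)`, which is at most
  `b ^ m * v m + θ m ^ 2`, would fall below `η (2 * m) ^ 2`.
* Let `k = ⌊3 / (4 (1 - b))⌋`, so that `b ^ k ≥ 1/4` by Bernoulli. Since `v t ≥ b ^ t * v 0` and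
  `v 0 > 4 η₀ ^ 2`, we have `T > k`. Running `v (t + 1) ≥ b * v t` backwards from `T` gives
  `η t < √(v t) ≤ 2 * η t` on the `k` steps preceding `T`; each of these steps at least halves
  `|θ|`, while `(1 - b) * θ t ^ 2 ≤ v (t + 1)` bounds `θ` at their start. Hence `θ T ^ 2` is at most
  `4 * η T ^ 2 / ((1 - b) * 4 ^ k)`, which is negligible against `η T ^ 2` (`theta_small`).
* After `20 * k` further steps `v` has shrunk to at most `2 * 10⁻⁴ * η T ^ 2`, whereas the
  polynomially decaying `η` has lost at most a factor `21` because `T ≥ k`. This contradicts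
  `√v > η / 2`.

The estimates only need `b > 19 / 20`, uniformly in `θ 0`, `η₀` and `α`.
-/

open Filter Topology

/-- While `|θ|` is nonincreasing, the memory of `v s` fades geometrically and the later inputs
contribute at most `θ s ^ 2`. -/
lemma v_add_le {b : ℝ} {θ v : ℕ → ℝ} (hb0 : 0 < b) (hb1 : b < 1)
    (hv : ∀ t, v (t + 1) = b * v t + (1 - b) * θ t ^ 2)
    (hθ : Antitone fun t => |θ t|) (s n : ℕ) :
    v (s + n) ≤ b ^ n * v s + θ s ^ 2 := by
  induction n with
  | zero => simp; positivity
  | succ n ih =>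
    have h1 : θ (s + n) ^ 2 ≤ θ s ^ 2 := sq_le_sq.2 (hθ (Nat.le_add_right s n))
    rw [← add_assoc, hv, pow_succ b n]
    nlinarith [mul_le_mul_of_nonneg_left ih hb0.le,
      mul_le_mul_of_nonneg_left h1 (sub_nonneg.2 hb1.le)]

lemma pow_mul_le_v_add {b : ℝ} {θ v : ℕ → ℝ} (hb0 : 0 < b) (hb1 : b < 1)
    (hv : ∀ t, v (t + 1) = b * v t + (1 - b) * θ t ^ 2) (s n : ℕ) :
    b ^ n * v s ≤ v (s + n) := by
  induction n with
  | zero => simp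
  | succ n ih =>
    rw [← add_assoc, hv, pow_succ b n]
    nlinarith [mul_le_mul_of_nonneg_left ih hb0.le,
      mul_nonneg (sub_nonneg.2 hb1.le) (sq_nonneg (θ (s + n)))]

/-- The learning rate loses at most a factor `c` when time is multiplied by `c`. -/
lemma rate_ge {η₀ α c x y : ℝ} (hη₀ : 0 < η₀) (hα0 : 0 < α) (hα1 : α < 1)
    (hc : 1 ≤ c) (hx : 0 < x) (hy : 0 < y) (hyx : y ≤ c * x) :
    η₀ * x ^ (-α) / c ≤ η₀ * y ^ (-α) := by
  have h1 : (c * x) ^ (-α) ≤ y ^ (-α) :=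
    Real.rpow_le_rpow_of_nonpos hy hyx (by linarith)
  have h2 : c ^ (-1 : ℝ) ≤ c ^ (-α) := Real.rpow_le_rpow_of_exponent_le hc (by linarith)
  rw [Real.rpow_neg_one] at h2
  rw [Real.mul_rpow (by linarith) hx.le] at h1
  have h3 : c⁻¹ * x ^ (-α) ≤ c ^ (-α) * x ^ (-α) :=
    mul_le_mul_of_nonneg_right h2 (by positivity)
  calc η₀ * x ^ (-α) / c = η₀ * (c⁻¹ * x ^ (-α)) := by field_simp
    _ ≤ _ := by gcongr; linarith

/-- The analytic core of `exists_sqrt_le`: both exponentials beat the polynomial `(m + 1) ^ 2`. -/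
lemma tendsto_aux {α b c : ℝ} (hα1 : α < 1) (hb0 : 0 < b) (hb1 : b < 1) (hc : 0 < c) :
    Tendsto (fun m : ℕ => ((m : ℝ) + 1) ^ 2 * b ^ m +
      ((m : ℝ) + 1) ^ 2 * Real.exp (-c * ((m : ℝ) + 1) ^ (1 - α))) atTop (𝓝 0) := by
  have hN : Tendsto (fun m : ℕ => (m : ℝ) + 1) atTop atTop :=
    tendsto_atTop_add_const_right _ _ tendsto_natCast_atTop_atTop
  have h1 : Tendsto (fun m : ℕ => ((m : ℝ) + 1) ^ 2 * b ^ m) atTop (𝓝 0) := by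
    have h := (tendsto_add_atTop_iff_nat 1).2
      (tendsto_pow_const_mul_const_pow_of_lt_one 2 hb0.le hb1)
    have h' := h.const_mul b⁻¹
    rw [mul_zero] at h'
    refine h'.congr fun m => ?_
    push_cast
    rw [pow_succ b m]
    field_simp
  have h2 : Tendsto (fun m : ℕ => ((m : ℝ) + 1) ^ 2 *
      Real.exp (-c * ((m : ℝ) + 1) ^ (1 - α))) atTop (𝓝 0) := by
    have h := (tendsto_rpow_mul_exp_neg_mul_atTop_nhds_zero (2 / (1 - α)) c hc).comp
      ((tendsto_rpow_atTop (sub_pos.2 hα1)).comp hN)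
    refine h.congr fun m => ?_
    simp only [Function.comp]
    rw [← Real.rpow_mul (by positivity), mul_div_cancel₀ _ (sub_pos.2 hα1).ne']
    norm_num
  simpa using h1.add h2

/-- If `|θ|` never increases (as under stability), `√v` drops to `η` at some time: otherwise `θ`
would decay faster than any power of `t`, and `v` with it. -/
lemma exists_sqrt_le {η₀ α b : ℝ} {θ v : ℕ → ℝ} (hη₀ : 0 < η₀) (hα0 : 0 < α) (hα1 : α < 1)
    (hb0 : 0 < b) (hb1 : b < 1)
    (hθ : ∀ t : ℕ, θ (t + 1) = (1 - η₀ * ((t : ℝ) + 1) ^ (-α) / √(v t)) * θ t)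
    (hv : ∀ t, v (t + 1) = b * v t + (1 - b) * θ t ^ 2)
    (hv0 : v 0 = θ 0 ^ 2) (hθ0 : 0 < |θ 0|) (hvpos : ∀ t, 0 < v t)
    (hanti : Antitone fun t => |θ t|) :
    ∃ t : ℕ, √(v t) ≤ η₀ * ((t : ℝ) + 1) ^ (-α) := by
  by_contra! H
  set A := |θ 0| with hA
  have hvA : ∀ t, v t ≤ A ^ 2 := by
    intro t
    induction t with
    | zero => rw [hv0, hA, sq_abs]
    | succ n ih =>
      have h1 : θ n ^ 2 ≤ A ^ 2 := by
        rw [← sq_abs (θ n)]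
        exact pow_le_pow_left₀ (abs_nonneg _) (hanti (Nat.zero_le n)) 2
      rw [hv]
      nlinarith
  have hsA : ∀ t, √(v t) ≤ A := fun t => Real.sqrt_le_iff.2 ⟨hθ0.le, hvA t⟩
  have hdecay : ∀ m t : ℕ, t ≤ m →
      |θ t| ≤ A * Real.exp (-(t * (η₀ * ((m : ℝ) + 1) ^ (-α) / A))) := by
    intro m t
    induction t with
    | zero => intro _; simp [hA]
    | succ t ih =>
      intro htm
      have hs : 0 < √(v t) := Real.sqrt_pos.2 (hvpos t)
      have h1 : η₀ * ((m : ℝ) + 1) ^ (-α) ≤ η₀ * ((t : ℝ) + 1) ^ (-α) := by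
        have hc : (t : ℝ) ≤ m := by exact_mod_cast (Nat.le_of_succ_le htm)
        exact mul_le_mul_of_nonneg_left (Real.rpow_le_rpow_of_nonpos (by positivity)
          (by linarith) (by linarith)) hη₀.le
      have h2 : η₀ * ((m : ℝ) + 1) ^ (-α) / A ≤ η₀ * ((t : ℝ) + 1) ^ (-α) / √(v t) :=
        div_le_div₀ (by positivity) h1 hs (hsA t)
      have h3 : η₀ * ((t : ℝ) + 1) ^ (-α) / √(v t) < 1 := (div_lt_one hs).2 (H t)
      have h4 := Real.add_one_le_exp (-(η₀ * ((m : ℝ) + 1) ^ (-α) / A))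
      rw [hθ, abs_mul, abs_of_pos (by linarith)]
      calc (1 - η₀ * ((t : ℝ) + 1) ^ (-α) / √(v t)) * |θ t|
          ≤ Real.exp (-(η₀ * ((m : ℝ) + 1) ^ (-α) / A)) *
            (A * Real.exp (-(t * (η₀ * ((m : ℝ) + 1) ^ (-α) / A)))) :=
            mul_le_mul (by linarith) (ih (by omega)) (abs_nonneg _) (Real.exp_pos _).le
        _ = _ := by
            rw [mul_left_comm, ← Real.exp_add]
            push_cast
            ring_nf
  have hlim := tendsto_aux hα1 hb0 hb1 (div_pos hη₀ hθ0)
  have hpos : 0 < η₀ ^ 2 / (4 * A ^ 2) := by positivity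
  obtain ⟨m, hm, hm1⟩ := ((hlim.eventually (gt_mem_nhds hpos)).and
    (eventually_ge_atTop 1)).exists
  have hm1' : (1 : ℝ) ≤ m := by exact_mod_cast hm1
  have hM : (0 : ℝ) < (m : ℝ) + 1 := by positivity
  have h1 := v_add_le hb0 hb1 hv hanti m m
  -- `1 / (2 * (m + 1))` is a lower bound for the decay factor of the rate at time `2 * m`.
  have h2 : η₀ / (2 * ((m : ℝ) + 1)) < √(v (m + m)) := by
    refine lt_of_le_of_lt ?_ (H (m + m))
    have h := rate_ge (x := 1) (y := ((m + m : ℕ) : ℝ) + 1) (c := 2 * ((m : ℝ) + 1)) hη₀ hα0 hα1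
      (by linarith) one_pos (by positivity) (by push_cast; linarith)
    simpa using h
  have h3 : (η₀ / (2 * ((m : ℝ) + 1))) ^ 2 < v (m + m) := by
    rw [← Real.sq_sqrt (hvpos (m + m)).le]
    exact pow_lt_pow_left₀ h2 (by positivity) two_ne_zero
  have h4 : θ m ^ 2 ≤ A ^ 2 * Real.exp (-(η₀ / A) * ((m : ℝ) + 1) ^ (1 - α)) := by
    have h := pow_le_pow_left₀ (abs_nonneg _) (hdecay m m le_rfl) 2
    rw [sq_abs, mul_pow, ← Real.exp_nat_mul] at h
    refine h.trans (mul_le_mul_of_nonneg_left (Real.exp_le_exp.2 ?_) (by positivity))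
    have e : ((m : ℝ) + 1) ^ (1 - α) = ((m : ℝ) + 1) * ((m : ℝ) + 1) ^ (-α) := by
      rw [sub_eq_add_neg, Real.rpow_add hM, Real.rpow_one]
    rw [e]
    have hq : 0 ≤ η₀ / A * ((m : ℝ) + 1) ^ (-α) := by positivity
    have e2 : η₀ * ((m : ℝ) + 1) ^ (-α) / A = η₀ / A * ((m : ℝ) + 1) ^ (-α) := by ring
    rw [e2]
    push_cast
    nlinarith
  have h5 : b ^ m * v m ≤ b ^ m * A ^ 2 := mul_le_mul_of_nonneg_left (hvA m) (by positivity)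
  rw [lt_div_iff₀ (by positivity)] at hm
  rw [div_pow, div_lt_iff₀ (by positivity)] at h3
  have h6 := h1.trans (add_le_add h5 h4)
  have h7 := mul_le_mul_of_nonneg_right h6 (show (0 : ℝ) ≤ (2 * ((m : ℝ) + 1)) ^ 2 by positivity)
  nlinarith

/-- If `√v` first reaches the rate `η` at time `T`, then each of the `k` preceding steps at least
halved `|θ|`, so that `θ T ^ 2` carries a factor `4 ^ (-k)`. -/
lemma theta_small {b : ℝ} {η θ v : ℕ → ℝ} (hη : ∀ t, 0 < η t) (hηanti : Antitone η)
    (hb0 : 0 < b) (hb1 : b < 1)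
    (hθ : ∀ t : ℕ, θ (t + 1) = (1 - η t / √(v t)) * θ t)
    (hv : ∀ t, v (t + 1) = b * v t + (1 - b) * θ t ^ 2)
    (hvpos : ∀ t, 0 < v t) {T k : ℕ} (hk0 : 0 < k) (hkT : k ≤ T) (hbk : 1 / 4 ≤ b ^ k)
    (hT : √(v T) ≤ η T) (hmin : ∀ t < T, η t < √(v t)) :
    (1 - b) * θ T ^ 2 * 4 ^ k ≤ 4 * η T ^ 2 := by
  have hvT : v T ≤ η T ^ 2 := (Real.sqrt_le_left (hη T).le).1 hT
  have hback : ∀ j ≤ k, v (T - k + j) ≤ 4 * η T ^ 2 := by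
    intro j hj
    have h1 := pow_mul_le_v_add hb0 hb1 hv (T - k + j) (k - j)
    rw [show T - k + j + (k - j) = T by omega] at h1
    have h2 : b ^ k ≤ b ^ (k - j) := pow_le_pow_of_le_one hb0.le hb1.le (Nat.sub_le k j)
    have h3 := mul_le_mul_of_nonneg_right (hbk.trans h2) (hvpos (T - k + j)).le
    linarith
  have hhalf : ∀ j ≤ k, θ (T - k + j) ^ 2 * 4 ^ j ≤ θ (T - k) ^ 2 := by
    intro j
    induction j with
    | zero => simp
    | succ j ih =>
      intro hj
      have ih' := ih (by omega)
      have hs : 0 < √(v (T - k + j)) := Real.sqrt_pos.2 (hvpos _)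
      have h1 : √(v (T - k + j)) ≤ 2 * η (T - k + j) := by
        have h := hηanti (show T - k + j ≤ T by omega)
        refine Real.sqrt_le_iff.2 ⟨by linarith [hη (T - k + j)], ?_⟩
        nlinarith [hback j (by omega), hη T]
      have h2 : η (T - k + j) / √(v (T - k + j)) < 1 := (div_lt_one hs).2 (hmin _ (by omega))
      have h3 : 1 / 2 ≤ η (T - k + j) / √(v (T - k + j)) := by
        rw [le_div_iff₀ hs]; linarith
      rw [← add_assoc, hθ, pow_succ]
      have h4 : (1 - η (T - k + j) / √(v (T - k + j))) ^ 2 * 4 ≤ 1 := by nlinarith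
      calc ((1 - η (T - k + j) / √(v (T - k + j))) * θ (T - k + j)) ^ 2 * (4 ^ j * 4)
          = ((1 - η (T - k + j) / √(v (T - k + j))) ^ 2 * 4) * (θ (T - k + j) ^ 2 * 4 ^ j) := by
            ring
        _ ≤ 1 * (θ (T - k + j) ^ 2 * 4 ^ j) := mul_le_mul_of_nonneg_right h4 (by positivity)
        _ ≤ _ := by linarith
  have h1 := hhalf k le_rfl
  rw [Nat.sub_add_cancel hkT] at h1
  have h2 := hback 1 hk0
  rw [hv] at h2
  have h3 := mul_le_mul_of_nonneg_left h1 (sub_nonneg.2 hb1.le)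
  nlinarith [mul_pos hb0 (hvpos (T - k))]

lemma linear_le_four_pow (k : ℕ) (hk : 10 ≤ k) : (80000 : ℝ) * k ≤ 4 ^ k := by
  induction k, hk using Nat.le_induction with
  | base => norm_num
  | succ n hn ih =>
    have : (10 : ℝ) ≤ n := by exact_mod_cast hn
    push_cast
    rw [pow_succ]
    linarith

lemma exp_neg_ten_le : Real.exp (-10) ≤ 1 / 10000 := by
  have h1 := Real.exp_one_gt_d9
  have h2 : (2.7 : ℝ) ^ 10 ≤ Real.exp 1 ^ 10 :=
    pow_le_pow_left₀ (by norm_num) (by linarith) 10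
  rw [← Real.exp_nat_mul] at h2
  norm_num at h2
  rw [Real.exp_neg, ← one_div]
  exact one_div_le_one_div_of_le (by norm_num) (le_trans (by norm_num) h2)

/-- The quantitative core: `20 * k` steps after the time `T`, `v` lies below `(η / 2) ^ 2`. The
hypothesis `19 / 20 < b` makes `k ≥ 10`, which is all the numerical estimates use. -/
lemma exists_unstable {η₀ α b : ℝ} {θ v : ℕ → ℝ} (hη₀ : 0 < η₀) (hα0 : 0 < α) (hα1 : α < 1)
    (hb : 19 / 20 < b) (hb1 : b < 1)
    (hθ : ∀ t : ℕ, θ (t + 1) = (1 - η₀ * ((t : ℝ) + 1) ^ (-α) / √(v t)) * θ t)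
    (hv : ∀ t, v (t + 1) = b * v t + (1 - b) * θ t ^ 2)
    (hv0 : v 0 = θ 0 ^ 2) (hθ0 : 2 * η₀ < |θ 0|) (hvpos : ∀ t, 0 < v t) :
    ∃ t : ℕ, √(v t) ≤ η₀ * ((t : ℝ) + 1) ^ (-α) / 2 := by
  by_contra! H
  have hb0 : 0 < b := by linarith
  have hε : 0 < 1 - b := by linarith
  set η : ℕ → ℝ := fun t => η₀ * ((t : ℝ) + 1) ^ (-α) with hηdef
  have hη : ∀ t, 0 < η t := fun t => by simp only [hηdef]; positivity
  have hηanti : Antitone η := fun s t hst => by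
    have hc : (s : ℝ) ≤ t := by exact_mod_cast hst
    exact mul_le_mul_of_nonneg_left (Real.rpow_le_rpow_of_nonpos (by positivity)
      (by linarith) (by linarith)) hη₀.le
  have hη0 : ∀ t, η t ≤ η₀ := fun t => by
    have h := hηanti (Nat.zero_le t)
    simpa [hηdef] using h
  have hanti : Antitone fun t => |θ t| := antitone_nat_of_succ_le fun t => by
    have hs : 0 < √(v t) := Real.sqrt_pos.2 (hvpos t)
    have h1 : 0 < η t / √(v t) := div_pos (hη t) hs
    have h2 : η t / √(v t) < 2 := by
      rw [div_lt_iff₀ hs]; linarith [H t]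
    rw [hθ, abs_mul]
    refine mul_le_of_le_one_left (abs_nonneg _) (abs_le.2 ⟨?_, ?_⟩)
    · change -1 ≤ 1 - η t / √(v t); linarith
    · change 1 - η t / √(v t) ≤ 1; linarith
  have hex : ∃ t : ℕ, √(v t) ≤ η t :=
    exists_sqrt_le hη₀ hα0 hα1 hb0 hb1 hθ hv hv0 (by linarith) hvpos hanti
  classical
  set T := Nat.find hex
  have hT : √(v T) ≤ η T := Nat.find_spec hex
  have hmin : ∀ t < T, η t < √(v t) := fun t ht => not_le.1 (Nat.find_min hex ht)
  set k := ⌊3 / (4 * (1 - b))⌋₊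
  have hk1 : (k : ℝ) ≤ 3 / (4 * (1 - b)) := Nat.floor_le (by positivity)
  have hk2 : 3 / (4 * (1 - b)) < k + 1 := Nat.lt_floor_add_one _
  rw [le_div_iff₀ (by positivity)] at hk1
  rw [div_lt_iff₀ (by positivity)] at hk2
  have hk10 : 10 ≤ k := by
    have : (10 : ℝ) < k + 1 := by
      by_contra! hcon
      nlinarith
    have : 10 < k + 1 := by exact_mod_cast this
    omega
  have hkε : 1 / 2 ≤ (1 - b) * k := by nlinarith
  have hbk : 1 / 4 ≤ b ^ k := by
    have h := one_add_mul_le_pow (a := b - 1) (by linarith) k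
    rw [add_sub_cancel] at h
    nlinarith
  have hkT : k ≤ T := by
    by_contra! hlt
    have h1 := pow_mul_le_v_add hb0 hb1 hv 0 T
    rw [zero_add, hv0, ← sq_abs] at h1
    have h2 : 1 / 4 ≤ b ^ T := hbk.trans (pow_le_pow_of_le_one hb0.le hb1.le hlt.le)
    have h3 : (2 * η₀) ^ 2 < |θ 0| ^ 2 := pow_lt_pow_left₀ hθ0 (by positivity) two_ne_zero
    have h4 : v T ≤ η T ^ 2 := (Real.sqrt_le_left (hη T).le).1 hT
    have h5 : η T ^ 2 ≤ η₀ ^ 2 := pow_le_pow_left₀ (hη T).le (hη0 T) 2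
    nlinarith
  have hsmall := theta_small hη hηanti hb0 hb1 hθ hv hvpos (by omega) hkT hbk hT hmin
  have hθT : θ T ^ 2 ≤ η T ^ 2 / 10000 := by
    have h1 := linear_le_four_pow k hk10
    have h2 : 40000 ≤ (1 - b) * 4 ^ k := by nlinarith
    nlinarith [mul_le_mul_of_nonneg_right h2 (sq_nonneg (θ T))]
  have hbn : b ^ (20 * k) ≤ 1 / 10000 := by
    have h1 : b ≤ Real.exp (-(1 - b)) := by linarith [Real.add_one_le_exp (-(1 - b))]
    have h2 := pow_le_pow_left₀ hb0.le h1 (20 * k)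
    rw [← Real.exp_nat_mul] at h2
    refine h2.trans (le_trans (Real.exp_le_exp.2 ?_) exp_neg_ten_le)
    push_cast
    nlinarith
  have hfin := v_add_le hb0 hb1 hv hanti T (20 * k)
  have hvT : v T ≤ η T ^ 2 := (Real.sqrt_le_left (hη T).le).1 hT
  have hrate : η T / 21 ≤ η (T + 20 * k) := by
    have hc : (k : ℝ) ≤ T := by exact_mod_cast hkT
    refine rate_ge hη₀ hα0 hα1 (by norm_num) (by positivity) (by positivity) ?_
    push_cast
    linarith
  have hlow : (η T / 42) ^ 2 < v (T + 20 * k) := by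
    rw [← Real.sq_sqrt (hvpos (T + 20 * k)).le]
    refine pow_lt_pow_left₀ ?_ (by linarith [hη T]) two_ne_zero
    have h : η (T + 20 * k) / 2 < √(v (T + 20 * k)) := H (T + 20 * k)
    linarith
  have hprod : b ^ (20 * k) * v T ≤ 1 / 10000 * η T ^ 2 :=
    mul_le_mul hbn hvT (hvpos T).le (by norm_num)
  nlinarith [pow_pos (hη T) 2]


/-- **Decaying learning rates cannot maintain stability for large β₂.**
For Adam (β₁ = 0) on the 1D quadratic with decaying learning rate
`η_t = η₀ (t+1)^{−α}`, `α ∈ (0,1)`, `η₀ > 0`, initialization `v₀ = θ₀²` and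
`|θ₀| > 2η₀`: there exists `β* ∈ (0,1)` such that for every `β₂ ∈ (β*, 1)`,
the stability condition `|1 − η_t/√v_t| < 1` cannot hold for all positive
integers `t`; that is, there exists some `t` with `√v_t ≤ η_t/2`. -/
theorem adam_quadratic_lr_decay_unstable (η₀ α : ℝ)
    (hη₀ : 0 < η₀) (hα0 : 0 < α) (hα1 : α < 1) :
    ∃ βstar : ℝ, 0 < βstar ∧ βstar < 1 ∧
      ∀ β₂ : ℝ, βstar < β₂ → β₂ < 1 →
        ∀ θ v : ℕ → ℝ,
          (∀ t : ℕ, θ (t + 1) =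
            (1 - η₀ * ((t : ℝ) + 1) ^ (-α) / Real.sqrt (v t)) * θ t) →
          (∀ t : ℕ, v (t + 1) = β₂ * v t + (1 - β₂) * θ t ^ 2) →
          v 0 = θ 0 ^ 2 →
          2 * η₀ < |θ 0| →
          ¬ (∀ t : ℕ, 0 < t →
              |1 - η₀ * ((t : ℝ) + 1) ^ (-α) / Real.sqrt (v t)| < 1) ∧
            ∃ t : ℕ, Real.sqrt (v t) ≤ η₀ * ((t : ℝ) + 1) ^ (-α) / 2 := by
  refine ⟨19 / 20, by norm_num, by norm_num, ?_⟩
  intro b hb hb1 θ v hθ hv hv0 hθ0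
  have hb0 : 0 < b := by linarith
  have hvpos : ∀ t, 0 < v t := by
    have h0 : 0 < v 0 := by
      rw [hv0, ← sq_abs]
      exact pow_pos (by linarith) 2
    intro t
    have h := pow_mul_le_v_add hb0 hb1 hv 0 t
    rw [zero_add] at h
    exact lt_of_lt_of_le (by positivity) h
  obtain ⟨t, ht⟩ := exists_unstable hη₀ hα0 hα1 hb hb1 hθ hv hv0 hθ0 hvpos
  refine ⟨fun hstab => ?_, t, ht⟩
  -- The two conclusions agree because the threshold is not reached at `t = 0`.
  have ht0 : 0 < t := by
    rcases Nat.eq_zero_or_pos t with rfl | h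
    · rw [hv0, Real.sqrt_sq_eq_abs] at ht
      norm_num at ht
      linarith
    · exact h
  have h1 := (abs_lt.1 (hstab t ht0)).1
  have h2 : 2 ≤ η₀ * ((t : ℝ) + 1) ^ (-α) / √(v t) := by
    rw [le_div_iff₀ (Real.sqrt_pos.2 (hvpos t))]
    linarith
  linarith
end
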